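/- Schnorr's martingale characterization of Martin-Löf randomness: A ∈ 2^ω is Martin-Löf random if and only if no c.e. martingale succeeds on A. -/

import Mathlib

open scoped ENNReal NNReal Classical

namespace AR

/-- Elements of Cantor space `2^ω`: infinite binary sequences. -/
abbrev Seq := ℕ → Bool

/-- Finite binary strings `2^{<ω}`. -/
abbrev Str := List Bool

/-- The first `n` bits of a sequence `A`, as a finite string (`A↾n`). -/
def pre (A : Seq) (n : ℕ) : Str := List.ofFn fun i : Fin n => A i

/-- The basic clopen cylinder `[σ]` of all sequences extending `σ`. -/
def cyl (σ : Str) : Set Seq := {A | pre A σ.length = σ}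

/-- A measure on Cantor space is *fair-coin* if every cylinder `[σ]` has measure
`2^{-|σ|}`; this uniquely characterizes the usual product measure `μ` on `2^ω`. -/
def FairCoin (μ : MeasureTheory.Measure Seq) : Prop :=
  ∀ σ : Str, μ (cyl σ) = (2 : ℝ≥0∞)⁻¹ ^ σ.length

/-- A machine is a partial computable function `2^{<ω} ⇀ 2^{<ω}`. -/
def IsMachine (M : Str →. Str) : Prop := Partrec M

/-- Kolmogorov complexity of `τ` relative to the machine `M`:
`C_M(τ) = min{|σ| : M(σ)↓ = τ}`, with value `∞` if no such `σ` exists. -/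
noncomputable def Cplx (M : Str →. Str) (τ : Str) : ℕ∞ :=
  sInf ((fun σ : Str => (σ.length : ℕ∞)) '' {σ | τ ∈ M σ})

/-- A universal machine: a machine simulating every machine up to an additive
constant.  `Cplx U` for universal `U` is plain Kolmogorov complexity `C`. -/
def UniversalMachine (U : Str →. Str) : Prop :=
  IsMachine U ∧ ∀ M : Str →. Str, IsMachine M → ∃ c : ℕ, ∀ τ, Cplx U τ ≤ Cplx M τ + c

/-- A set of strings is prefix-free if none of its elements is a proper initial
segment of another. -/
def PrefixFree (S : Set Str) : Prop :=
  ∀ σ ∈ S, ∀ τ ∈ S, σ <+: τ → σ = τ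

/-- A prefix-free machine: a machine whose domain is prefix-free. -/
def PrefixFreeMachine (M : Str →. Str) : Prop :=
  IsMachine M ∧ PrefixFree {σ | (M σ).Dom}

/-- A universal prefix-free machine.  `Cplx U` for such `U` is prefix-free
Kolmogorov complexity `K`. -/
def UniversalPFMachine (U : Str →. Str) : Prop :=
  PrefixFreeMachine U ∧
    ∀ M : Str →. Str, PrefixFreeMachine M → ∃ c : ℕ, ∀ τ, Cplx U τ ≤ Cplx M τ + c

/-- A c.e. (recursively enumerable) predicate. -/
def CEPred {α} [Primcodable α] (p : α → Prop) : Prop :=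
  Partrec fun a => Part.assert (p a) fun _ => Part.some ()

/-- A Martin-Löf test: a sequence of uniformly Σ⁰₁ classes `U i`, given by a single
c.e. set `W` of pairs, with `μ (U i) ≤ 2^{-i}`. -/
def MLTest (μ : MeasureTheory.Measure Seq) (U : ℕ → Set Seq) : Prop :=
  ∃ W : Set (ℕ × Str), CEPred (· ∈ W) ∧
    (∀ i, U i = ⋃ σ ∈ {σ : Str | (i, σ) ∈ W}, cyl σ) ∧
    ∀ i, μ (U i) ≤ (2 : ℝ≥0∞)⁻¹ ^ i

/-- `A` is Martin-Löf random if it passes every Martin-Löf test. -/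
def MLRandom (μ : MeasureTheory.Measure Seq) (A : Seq) : Prop :=
  ∀ U : ℕ → Set Seq, MLTest μ U → A ∉ ⋂ i, U i

/-- A martingale: a nonnegative function on strings satisfying the fairness
condition `d(σ) = (d(σ0) + d(σ1))/2`. -/
def IsMartingale (d : Str → ℝ≥0) : Prop :=
  ∀ σ : Str, d σ = (d (σ ++ [false]) + d (σ ++ [true])) / 2

/-- An `s`-gale: `d(σ) = 2^{-s} (d(σ0) + d(σ1))`. -/
def IsGale (s : ℝ) (d : Str → ℝ≥0) : Prop :=
  ∀ σ : Str, (d σ : ℝ) = (2 : ℝ) ^ (-s) * ((d (σ ++ [false]) : ℝ) + (d (σ ++ [true]) : ℝ))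

/-- `d` succeeds on `A` if `limsup_n d(A↾n) = ∞`. -/
def Succeeds (d : Str → ℝ≥0) (A : Seq) : Prop :=
  Filter.limsup (fun n => (d (pre A n) : ℝ≥0∞)) Filter.atTop = ⊤

/-- The success set `S[d]` of `d`. -/
def successSet (d : Str → ℝ≥0) : Set Seq := {A | Succeeds d A}

/-- The values of `d` are uniformly left-c.e. reals: there is a computable
`g : 2^{<ω} × ℕ → ℚ`, nondecreasing in the second argument, with
`sup_n g(σ, n) = d(σ)` (i.e. `g(σ, ·) → d(σ)`) for every `σ`.  A martingale
(or `s`-gale) with this property is a c.e. martingale (or c.e. `s`-gale). -/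
def CEValues (d : Str → ℝ≥0) : Prop :=
  ∃ g : Str × ℕ → ℚ, Computable g ∧ (∀ σ, Monotone fun n => g (σ, n)) ∧
    ∀ σ, Filter.Tendsto (fun n => (g (σ, n) : ℝ)) Filter.atTop (nhds (d σ))

/-!
For a martingale `d`, Ville's inequality bounds the measure of `{A | ∃ n, c < d (A↾n)}` by
`d [] / c`, so a c.e. martingale exceeds the thresholds `C * 2 ^ i`, with `d [] ≤ C`, on the
classes of a Martin-Löf test. Conversely, conditional probability given a cylinder is a fair
average over its two halves, so a test `U` yields the martingale `d σ = ∑ i, μ (U i | [σ])`, which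
is finite because `∑ i, μ (U i) ≤ 2`. If `A ∈ ⋂ i, U i`, each summand is eventually `1` along `A`,
hence `d` is unbounded there; enumerating the test approximates `d` from below by counting strings.
-/

open Encodable Filter MeasureTheory ProbabilityTheory
open scoped Topology

section Computability

variable {α σ : Type*} [Primcodable α] [Primcodable σ]

lemma cePred_exists {p : α → ℕ → Prop} (hp : ComputablePred fun x : α × ℕ => p x.1 x.2) :
    CEPred fun a => ∃ n, p a n := by
  have hfind : Partrec fun a => Nat.rfind fun n => Part.some (decide (p a n)) :=
    Partrec.rfind hp.decide.partrec
  exact hfind.dom_re.of_eq fun a =>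
    (Nat.rfind_dom (p := fun n => Part.some (decide (p a n)))).trans (by simp)

lemma CEPred.exists_primrec_stages {p : α → Prop} (hp : CEPred p) :
    ∃ V : α → ℕ → Bool, Primrec₂ V ∧ (∀ a, Monotone (V a)) ∧ ∀ a, p a ↔ ∃ s, V a s := by
  obtain ⟨c, hc⟩ := Nat.Partrec.Code.exists_code.1 hp
  refine ⟨fun a s => (c.evaln s (encode a)).isSome, ?_, fun a s t hst => ?_, fun a => ?_⟩
  · exact Primrec.option_isSome.comp (Nat.Partrec.Code.primrec_evaln.comp
      (.pair (.pair .snd (.const c)) (Primrec.encode.comp .fst)))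
  · rw [Bool.le_iff_imp]
    simp only [Option.isSome_iff_exists]
    exact fun ⟨x, hx⟩ => ⟨x, Nat.Partrec.Code.evaln_mono hst hx⟩
  · have hdom : p a ↔ (c.eval (encode a)).Dom := by simp [hc, Part.assert]
    simp only [hdom, Part.dom_iff_mem, Nat.Partrec.Code.evaln_complete,
      Option.isSome_iff_exists, Option.mem_def]
    exact exists_comm

lemma primrec_nat_pow : Primrec₂ ((· ^ ·) : ℕ → ℕ → ℕ) :=
  Primrec₂.unpaired'.1 Nat.Primrec.pow

lemma primrec_sum_range {f : α → ℕ → ℕ} {n : α → ℕ} (hf : Primrec₂ f) (hn : Primrec n) :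
    Primrec fun a => ∑ i ∈ Finset.range (n a), f a i := by
  have hadd : Primrec₂ fun (a : α) (x : ℕ × ℕ) => x.2 + f a x.1 :=
    Primrec.nat_add.comp (Primrec.snd.comp .snd) (hf.comp .fst (Primrec.fst.comp .snd))
  refine (Primrec.nat_rec' hn (.const 0) hadd).of_eq fun a => ?_
  induction n a with
  | zero => rfl
  | succ n ih => rw [Finset.sum_range_succ, ← ih]

lemma primrec_list_countP {l : α → List σ} {p : α → σ → Prop} [∀ a, DecidablePred (p a)]
    (hl : Primrec l) (hp : PrimrecRel p) :
    Primrec fun a => (l a).countP fun b => decide (p a b) := by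
  simp only [List.countP_eq_length_filter]
  exact Primrec.list_length.comp (hp.swap.listFilter.comp hl .id)

lemma primrecRel_dvd : PrimrecRel ((· ∣ ·) : ℕ → ℕ → Prop) :=
  (Primrec.eq.comp (Primrec.nat_mod.comp .snd .fst) (.const 0)).of_eq fun _ =>
    (Nat.dvd_iff_mod_eq_zero ..).symm

lemma primrecRel_coprime : PrimrecRel Nat.Coprime := by
  have hdvd : PrimrecRel fun (k : ℕ) (x : ℕ × ℕ) => ¬ (k ∣ x.1 ∧ k ∣ x.2 ∧ k ≠ 1) :=
    ((primrecRel_dvd.comp .fst (Primrec.fst.comp .snd)).and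
      ((primrecRel_dvd.comp .fst (Primrec.snd.comp .snd)).and
        (Primrec.eq.comp .fst (.const 1)).not)).not
  refine (hdvd.forall_mem_list.comp
    (Primrec.list_range.comp (Primrec.succ.comp Primrec.nat_add)) .id).of_eq fun ⟨m, n⟩ => ?_
  simp only [List.mem_range, Nat.lt_succ_iff, id]
  constructor
  · intro h
    have hle : Nat.gcd m n ≤ m + n := by
      rcases m.eq_zero_or_pos with rfl | hm
      · simp
      · exact (Nat.gcd_le_left n hm).trans (Nat.le_add_right m n)
    by_contra hne
    exact h _ hle ⟨Nat.gcd_dvd_left m n, Nat.gcd_dvd_right m n, hne⟩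
  · rintro h k - ⟨hm, hn, hk⟩
    exact hk (Nat.eq_one_of_dvd_coprimes h hm hn)

-- `Denumerable.ofEncodableOfInfinite`, which underlies Mathlib's `Primcodable ℚ`, numbers an
-- element by the rank of its original code among all codes; enumerating the codes in order
-- recovers the original code from the rank.
lemma computable_subtype_ofNat (s : Set ℕ) [DecidablePred (· ∈ s)] [Infinite s]
    (hs : ComputablePred (· ∈ s)) : Computable fun n => (Nat.Subtype.ofNat s n : ℕ) := by
  have hex (k : ℕ) : ∃ m, k + m + 1 ∈ s := by
    obtain ⟨n, hn, hlt⟩ := (Set.infinite_coe_iff.1 ‹Infinite s›).exists_gt k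
    obtain ⟨m, rfl⟩ := Nat.exists_eq_add_of_lt hlt
    exact ⟨m, hn⟩
  have hgap : Computable fun k => Nat.find (hex k) :=
    Computable.find (P := fun k m => k + m + 1 ∈ s) (Computable.computablePred
      (hs.decide.comp (Primrec.succ.comp Primrec.nat_add).to_comp)) hex
  have hnext : Computable₂ fun (_ : ℕ) (x : ℕ × ℕ) => x.2 + Nat.find (hex x.2) + 1 :=
    Computable.succ.comp (Primrec.nat_add.to_comp.comp (Computable.snd.comp .snd)
      (hgap.comp (Computable.snd.comp .snd)))
  refine (Computable.nat_rec .id (.const (Nat.Subtype.ofNat s 0 : ℕ)) hnext).of_eq fun n => ?_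
  induction n with
  | zero => rfl
  | succ n ih => simp only [id] at ih ⊢; rw [ih]; rfl

lemma computable_encode_ofEncodableOfInfinite {β : Type*} [e : Encodable β] [Infinite β]
    (h : ComputablePred (· ∈ Set.range (@encode β e))) :
    letI := Denumerable.ofEncodableOfInfinite β
    Computable (@encode β e) := by
  let := decidableRangeEncode β
  have : Infinite (Set.range (@encode β e)) :=
    Infinite.of_injective _ (Equiv.ofInjective _ encode_injective).injective
  let d := Denumerable.ofEncodableOfInfinite β
  have hofNat (n : ℕ) : @encode β e (Denumerable.ofNat β n) =
      (Nat.Subtype.ofNat (Set.range (@encode β e)) n : ℕ) :=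
    congrArg Subtype.val ((equivRangeEncode β).apply_symm_apply _)
  refine ((computable_subtype_ofNat _ h).comp Computable.encode).of_eq fun b => ?_
  rw [← hofNat, Denumerable.ofNat_encode]

end Computability

section RationalComputability

variable {α σ : Type*} [Primcodable α] [Primcodable σ]

lemma primrec_int_casesOn {f g : ℕ → σ} (hf : Primrec f) (hg : Primrec g) :
    Primrec fun z : ℤ => (z.casesOn (f ·) (g ·) : σ) := by
  have hsum : Primrec Equiv.intEquivNatSumNat :=
    Primrec.encode_iff.1 (Primrec.encode.of_eq fun z => by cases z <;> rfl)
  refine (Primrec.sumCasesOn hsum (hf.comp₂ .right) (hg.comp₂ .right)).of_eq fun z => ?_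
  cases z <;> rfl

lemma primrec_int_natAbs : Primrec Int.natAbs :=
  (primrec_int_casesOn .id .succ).of_eq fun z => by cases z <;> rfl

lemma primrec_int_toNat : Primrec Int.toNat :=
  (primrec_int_casesOn .id (.const 0)).of_eq fun z => by cases z <;> rfl

lemma primrecPred_int_nonneg : PrimrecPred fun z : ℤ => 0 ≤ z :=
  (Primrec.eq.comp primrec_int_natAbs primrec_int_toNat).of_eq fun z => by omega

lemma encode_rat (q : ℚ) : @encode ℚ Rat.instEncodable q = Nat.pair (encode q.num) q.den :=
  rfl

lemma mem_range_encode_rat {m : ℕ} :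
    m ∈ Set.range (@encode ℚ Rat.instEncodable) ↔
      m.unpair.2 ≠ 0 ∧ Nat.Coprime (Denumerable.ofNat ℤ m.unpair.1).natAbs m.unpair.2 := by
  constructor
  · rintro ⟨q, rfl⟩
    rw [encode_rat, Nat.unpair_pair, Denumerable.ofNat_encode]
    exact ⟨q.den_ne_zero, q.reduced⟩
  · rintro ⟨hden, hcop⟩
    refine ⟨⟨_, _, hden, hcop⟩, ?_⟩
    rw [encode_rat, Denumerable.encode_ofNat, Nat.pair_unpair]

lemma computable_encode_rat : Computable (@encode ℚ Rat.instEncodable) := by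
  refine computable_encode_ofEncodableOfInfinite (Computable.computablePred ?_)
  have hden : PrimrecPred fun m : ℕ => m.unpair.2 ≠ 0 :=
    (Primrec.eq.comp (Primrec.snd.comp .unpair) (.const 0)).not
  have hcop : PrimrecPred fun m : ℕ =>
      Nat.Coprime (Denumerable.ofNat ℤ m.unpair.1).natAbs m.unpair.2 :=
    primrecRel_coprime.comp
      (primrec_int_natAbs.comp ((Primrec.ofNat ℤ).comp (Primrec.fst.comp .unpair)))
      (Primrec.snd.comp .unpair)
  exact (((hden.and hcop).of_eq fun m => mem_range_encode_rat.symm).decide).to_comp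

lemma computable_rat_num : Computable Rat.num :=
  ((Computable.ofNat ℤ).comp
    (Computable.fst.comp (Computable.unpair.comp computable_encode_rat))).of_eq fun q => by
      rw [encode_rat, Nat.unpair_pair, Denumerable.ofNat_encode]

lemma computable_rat_den : Computable Rat.den :=
  (Computable.snd.comp (Computable.unpair.comp computable_encode_rat)).of_eq fun q => by
    rw [encode_rat, Nat.unpair_pair]

lemma natCast_lt_rat_iff {n : ℕ} {q : ℚ} : (n : ℚ) < q ↔ n * q.den < q.num.toNat := by
  rw [Rat.lt_iff, Int.lt_toNat]
  simp

lemma computablePred_natCast_lt_rat {f : α → ℕ} {q : α → ℚ} (hf : Computable f)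
    (hq : Computable q) : ComputablePred fun a => (f a : ℚ) < q a := by
  have hlt : ComputablePred fun a => f a * (q a).den < (q a).num.toNat :=
    Computable.computablePred <| Primrec.nat_lt.decide.to_comp.comp
      (Primrec.nat_mul.to_comp.comp hf (computable_rat_den.comp hq))
      (primrec_int_toNat.to_comp.comp (computable_rat_num.comp hq))
  exact hlt.of_eq fun a => natCast_lt_rat_iff.symm

lemma rat_eq_div_natCast_iff {q : ℚ} {m n : ℕ} (hn : n ≠ 0) :
    q = (m : ℚ) / n ↔ 0 ≤ q.num ∧ q.num.natAbs * n = m * q.den := by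
  have hq : q = (m : ℚ) / n ↔ q.num * n = m * q.den := by
    have hn : (n : ℚ) ≠ 0 := Nat.cast_ne_zero.2 hn
    conv_lhs => rw [← Rat.num_div_den q, div_eq_div_iff (Nat.cast_ne_zero.2 q.den_ne_zero) hn]
    exact_mod_cast Iff.rfl
  rw [hq]
  constructor
  · intro h
    have hnum : 0 ≤ q.num := nonneg_of_mul_nonneg_left (h ▸ by positivity)
      (Int.natCast_pos.2 (Nat.pos_of_ne_zero hn))
    exact ⟨hnum, by zify; rwa [abs_of_nonneg hnum]⟩
  · rintro ⟨hnum, h⟩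
    zify at h
    rwa [abs_of_nonneg hnum] at h

lemma computable_natCast_div_natCast {f g : α → ℕ} (hf : Computable f) (hg : Computable g)
    (hg0 : ∀ a, g a ≠ 0) : Computable fun a => (f a : ℚ) / g a := by
  have hex (a : α) : ∃ n, Denumerable.ofNat ℚ n = (f a : ℚ) / g a :=
    (Denumerable.eqv ℚ).symm.surjective _
  have hq : Computable fun x : α × ℕ => Denumerable.ofNat ℚ x.2 :=
    (Computable.ofNat ℚ).comp .snd
  have hnum := computable_rat_num.comp hq
  have hcross := Primrec.eq.decide.to_comp.comp
    (Primrec.nat_mul.to_comp.comp (primrec_int_natAbs.to_comp.comp hnum) (hg.comp .fst))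
    (Primrec.nat_mul.to_comp.comp (hf.comp .fst) (computable_rat_den.comp hq))
  -- Only decoding of rationals is known to be computable, so the quotient is found by search.
  have hsearch : ComputablePred fun x : α × ℕ => Denumerable.ofNat ℚ x.2 = (f x.1 : ℚ) / g x.1 :=
    Computable.computablePred <| (Primrec.and.to_comp.comp
      (primrecPred_int_nonneg.decide.to_comp.comp hnum) hcross).of_eq fun x => by
        simp only [rat_eq_div_natCast_iff (hg0 x.1), Bool.decide_and]
  exact ((Computable.ofNat ℚ).comp (Computable.find hsearch hex)).of_eq fun a =>
    Nat.find_spec (hex a)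

end RationalComputability

section Cylinder

@[simp]
lemma length_pre (A : Seq) (n : ℕ) : (pre A n).length = n :=
  List.length_ofFn

lemma pre_succ (A : Seq) (n : ℕ) : pre A (n + 1) = pre A n ++ [A n] := by
  simp only [pre, List.ofFn_succ_last, Fin.val_castSucc, Fin.val_last]

lemma take_pre (A : Seq) {m n : ℕ} (h : m ≤ n) : (pre A n).take m = pre A m := by
  refine List.ext_getElem (by simp [h]) fun i _ _ => ?_
  simp [pre]

lemma mem_cyl_pre (A : Seq) (n : ℕ) : A ∈ cyl (pre A n) := by
  simp [cyl]

lemma cyl_nil : cyl [] = Set.univ :=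
  Set.eq_univ_of_forall fun A => mem_cyl_pre A 0

lemma cyl_append_singleton (σ : Str) (b : Bool) :
    cyl (σ ++ [b]) = cyl σ ∩ {A | A σ.length = b} := by
  ext A
  change pre A (σ ++ [b]).length = σ ++ [b] ↔ pre A σ.length = σ ∧ A σ.length = b
  rw [List.length_append, List.length_singleton, pre_succ, List.append_singleton_inj]

lemma cyl_pre_anti (A : Seq) : Antitone fun n => cyl (pre A n) := by
  intro m n h B (hB : pre B (pre A n).length = pre A n)
  rw [length_pre] at hB
  change pre B (pre A m).length = pre A m
  rw [length_pre, ← take_pre B h, hB, take_pre A h]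

lemma measurableSet_cyl (σ : Str) : MeasurableSet (cyl σ) := by
  induction σ using List.reverseRecOn with
  | nil => exact cyl_nil ▸ MeasurableSet.univ
  | append_singleton σ b ih =>
    rw [cyl_append_singleton]
    exact ih.inter (measurableSet_eq_fun (measurable_pi_apply _) measurable_const)

lemma biUnion_cyl (W : Set Str) : ⋃ σ ∈ W, cyl σ = {A | ∃ n, pre A n ∈ W} := by
  ext A
  simp only [Set.mem_iUnion₂, Set.mem_ofPred_eq]
  refine ⟨fun ⟨σ, hσ, hA⟩ => ⟨σ.length, ?_⟩, fun ⟨n, hn⟩ => ⟨_, hn, mem_cyl_pre A n⟩⟩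
  rwa [show pre A σ.length = σ from hA]

lemma cond_cyl_mono (μ : Measure Seq) {S T : Set Seq} {σ : Str} (h : cyl σ ∩ S ⊆ T) :
    μ[S | cyl σ] ≤ μ[T | cyl σ] := by
  rw [← cond_inter_self (measurableSet_cyl σ) S]
  exact measure_mono h

end Cylinder

namespace FairCoin

variable {μ : Measure Seq}

lemma isProbabilityMeasure (hμ : FairCoin μ) : IsProbabilityMeasure μ :=
  ⟨by simpa [cyl_nil] using hμ []⟩

lemma measure_cyl_ne_zero (hμ : FairCoin μ) (σ : Str) : μ (cyl σ) ≠ 0 := by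
  simp [hμ σ]

lemma isProbabilityMeasure_cond (hμ : FairCoin μ) (σ : Str) :
    IsProbabilityMeasure μ[|cyl σ] :=
  cond_isProbabilityMeasure_of_finite (hμ.measure_cyl_ne_zero σ) (by simp [hμ σ])

lemma cond_cyl (hμ : FairCoin μ) (S : Set Seq) (σ : Str) :
    μ[S | cyl σ] = 2 ^ σ.length * μ (cyl σ ∩ S) := by
  rw [cond_apply (measurableSet_cyl σ), hμ σ, ENNReal.inv_pow, inv_inv]

lemma cond_cyl_le (hμ : FairCoin μ) (S : Set Seq) (σ : Str) :
    μ[S | cyl σ] ≤ 2 ^ σ.length * μ S := by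
  rw [hμ.cond_cyl]
  gcongr
  exact Set.inter_subset_right

lemma cond_cyl_eq_one (hμ : FairCoin μ) {S : Set Seq} {σ : Str} (h : cyl σ ⊆ S) :
    μ[S | cyl σ] = 1 := by
  rw [← cond_inter_self (measurableSet_cyl σ), Set.inter_eq_left.2 h,
    cond_apply_self (hμ.measure_cyl_ne_zero σ) (by simp [hμ σ])]

lemma cond_cyl_eq_average (hμ : FairCoin μ) (S : Set Seq) (σ : Str) :
    μ[S | cyl σ] = (μ[S | cyl (σ ++ [false])] + μ[S | cyl (σ ++ [true])]) / 2 := by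
  have hbit : MeasurableSet {A : Seq | A σ.length = false} :=
    measurableSet_eq_fun (measurable_pi_apply _) measurable_const
  have hdiff : cyl (σ ++ [true]) ∩ S = (cyl σ ∩ S) \ {A : Seq | A σ.length = false} := by
    ext A
    simp [cyl_append_singleton, and_right_comm]
  have hsplit : μ (cyl σ ∩ S) = μ (cyl (σ ++ [false]) ∩ S) + μ (cyl (σ ++ [true]) ∩ S) := by
    rw [hdiff, cyl_append_singleton, Set.inter_right_comm, measure_inter_add_sdiff _ hbit]
  have hpow : (2 : ℝ≥0∞) ^ (σ.length + 1) / 2 = 2 ^ σ.length := by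
    rw [pow_succ, ENNReal.mul_div_cancel_right two_ne_zero ENNReal.ofNat_ne_top]
  simp only [hμ.cond_cyl, List.length_append, List.length_singleton]
  rw [← mul_add, ← hsplit, ENNReal.mul_div_right_comm, hpow]

end FairCoin

section Ville

variable {μ : Measure Seq} {d : Str → ℝ≥0}

lemma IsMartingale.mul_cond_le (hd : IsMartingale d) (hμ : FairCoin μ) (c : ℝ≥0) (N : ℕ)
    (σ : Str) : c * μ[{A | ∃ k < N, c < d (pre A (σ.length + k))} | cyl σ] ≤ d σ := by
  induction N generalizing σ with
  | zero => simp
  | succ N ih =>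
    obtain hσ | hσ := lt_or_ge c (d σ)
    · have := hμ.isProbabilityMeasure_cond σ
      exact (mul_le_of_le_one_right' prob_le_one).trans (ENNReal.coe_le_coe.2 hσ.le)
    have hchild (b : Bool) : μ[{A | ∃ k < N + 1, c < d (pre A (σ.length + k))} | cyl (σ ++ [b])] ≤
        μ[{A | ∃ k < N, c < d (pre A ((σ ++ [b]).length + k))} | cyl (σ ++ [b])] := by
      refine cond_cyl_mono μ fun A ⟨hA, k, hk, hlt⟩ => ?_
      rw [cyl_append_singleton] at hA
      obtain _ | k := k
      · have hpre : pre A σ.length = σ := hA.1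
        exact absurd (hpre ▸ hlt) hσ.not_gt
      · exact ⟨k, Nat.succ_lt_succ_iff.1 hk, by simpa [add_assoc, add_comm 1] using hlt⟩
    calc c * μ[{A | ∃ k < N + 1, c < d (pre A (σ.length + k))} | cyl σ]
      _ ≤ (d (σ ++ [false]) + d (σ ++ [true])) / 2 := by
        rw [hμ.cond_cyl_eq_average, ← mul_div_assoc, mul_add]
        gcongr <;> exact (mul_le_mul_right (hchild _) _).trans (ih _)
      _ = d σ := by
        rw [hd σ, ENNReal.coe_div two_ne_zero, ENNReal.coe_add, ENNReal.coe_two]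

lemma IsMartingale.mul_measure_le (hd : IsMartingale d) (hμ : FairCoin μ) (c : ℝ≥0) :
    c * μ {A | ∃ k, c < d (pre A k)} ≤ d [] := by
  have hmono : Monotone fun N : ℕ => {A : Seq | ∃ k < N, c < d (pre A k)} :=
    fun M N hMN A ⟨k, hk, hlt⟩ => ⟨k, hk.trans_le hMN, hlt⟩
  have hunion : {A | ∃ k, c < d (pre A k)} = ⋃ N, {A : Seq | ∃ k < N, c < d (pre A k)} := by
    ext A
    simp only [Set.mem_iUnion, Set.mem_ofPred_eq]
    exact ⟨fun ⟨k, hlt⟩ => ⟨k + 1, k, k.lt_succ_self, hlt⟩, fun ⟨_, k, _, hlt⟩ => ⟨k, hlt⟩⟩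
  rw [hunion, hmono.measure_iUnion, ENNReal.mul_iSup]
  have := hμ.isProbabilityMeasure
  exact iSup_le fun N => by simpa [cyl_nil, cond_univ] using hd.mul_cond_le hμ c N []

lemma Succeeds.exists_lt {A : Seq} (h : Succeeds d A) (c : ℝ≥0) : ∃ n, c < d (pre A n) := by
  by_contra! hle
  have hlim : limsup (fun n => (d (pre A n) : ℝ≥0∞)) atTop ≤ c :=
    limsup_le_of_le (h := .of_forall fun n => ENNReal.coe_le_coe.2 (hle n))
  exact ENNReal.coe_ne_top (top_le_iff.1 (h.symm.trans_le hlim))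

lemma CEValues.cePred_natCast_lt {α : Type*} [Primcodable α] (hd : CEValues d) {f : α → ℕ}
    {τ : α → Str} (hf : Computable f) (hτ : Computable τ) :
    CEPred fun a => (f a : ℝ≥0) < d (τ a) := by
  obtain ⟨g, hg, hmono, hlim⟩ := hd
  have hcomp : ComputablePred fun x : α × ℕ => (f x.1 : ℚ) < g (τ x.1, x.2) :=
    computablePred_natCast_lt_rat (hf.comp .fst) (hg.comp ((hτ.comp .fst).pair .snd))
  have hiff (a : α) : (f a : ℝ≥0) < d (τ a) ↔ ∃ n, (f a : ℚ) < g (τ a, n) := by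
    have hlub : IsLUB (Set.range fun n => (g (τ a, n) : ℝ)) (d (τ a)) :=
      isLUB_of_tendsto_atTop (fun m n hmn => Rat.cast_le.2 (hmono (τ a) hmn)) (hlim (τ a))
    rw [← NNReal.coe_lt_coe, NNReal.coe_natCast, lt_isLUB_iff hlub, Set.exists_range_iff]
    exact exists_congr fun n => by norm_cast
  simpa only [hiff] using cePred_exists (p := fun a n => (f a : ℚ) < g (τ a, n)) hcomp

theorem IsMartingale.exists_mlTest (hd : IsMartingale d) (hμ : FairCoin μ) (hce : CEValues d) :
    ∃ U, MLTest μ U ∧ successSet d ⊆ ⋂ i, U i := by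
  obtain ⟨C, hC⟩ := exists_nat_gt (d [])
  let W : Set (ℕ × Str) := {x | ((C * 2 ^ x.1 : ℕ) : ℝ≥0) < d x.2}
  have hW : CEPred (· ∈ W) := hce.cePred_natCast_lt
    (Primrec.nat_mul.comp (.const C) (primrec_nat_pow.comp (.const 2) .fst)).to_comp .snd
  refine ⟨fun i => {A | ∃ n, (i, pre A n) ∈ W},
    ⟨W, hW, fun i => (biUnion_cyl {σ | (i, σ) ∈ W}).symm, fun i => ?_⟩,
    fun A hA => Set.mem_iInter.2 fun i => Succeeds.exists_lt hA (C * 2 ^ i : ℕ)⟩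
  have hC0 : (C : ℝ≥0∞) ≠ 0 := by
    exact_mod_cast (zero_le.trans_lt hC).ne'
  have hVille : C * (2 ^ i * μ {A | ∃ n, (i, pre A n) ∈ W}) ≤ C * 1 := by
    calc C * (2 ^ i * μ {A | ∃ n, (i, pre A n) ∈ W})
      _ ≤ d [] := by simpa [W, mul_assoc] using hd.mul_measure_le hμ ((C * 2 ^ i : ℕ) : ℝ≥0)
      _ ≤ C * 1 := by simpa using ENNReal.coe_le_coe.2 hC.le
  rw [ENNReal.mul_le_mul_iff_right hC0 (ENNReal.natCast_ne_top C), mul_comm] at hVille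
  rwa [← ENNReal.inv_pow, ENNReal.le_inv_iff_mul_le]

end Ville

/-- All binary strings of length `n`; an explicit list, so that sums over them are visibly
primitive recursive. -/
def strings : ℕ → List Str
  | 0 => [[]]
  | n + 1 => (strings n).map (false :: ·) ++ (strings n).map (true :: ·)

lemma primrec_strings : Primrec strings := by
  have hcons (b : Bool) : Primrec fun l : List Str => l.map (b :: ·) :=
    Primrec.list_map .id (Primrec.list_cons.comp (.const b) .snd)
  have hstep : Primrec fun l : List Str => l.map (false :: ·) ++ l.map (true :: ·) :=
    Primrec.list_append.comp (hcons false) (hcons true)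
  refine (Primrec.nat_rec₁ [[]] (hstep.comp₂ .right)).of_eq fun n => ?_
  induction n with
  | zero => rfl
  | succ n ih => simp only [strings, ← ih]

lemma FairCoin.cond_setOf_pre {μ : Measure Seq} (hμ : FairCoin μ) (p : Str → Prop)
    [DecidablePred p] (σ : Str) (n : ℕ) : μ[{A | p (pre A (σ.length + n))} | cyl σ] =
      (strings n).countP (fun τ => p (σ ++ τ)) / 2 ^ n := by
  induction n generalizing σ with
  | zero =>
    have hσ {A : Seq} (hA : A ∈ cyl σ) : pre A (σ.length + 0) = σ := hA
    by_cases h : p σ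
    · rw [hμ.cond_cyl_eq_one fun A hA => by rwa [Set.mem_ofPred_eq, hσ hA]]
      simp [strings, h]
    · have hempty : μ[{A | p (pre A (σ.length + 0))} | cyl σ] ≤ μ[∅ | cyl σ] :=
        cond_cyl_mono μ fun A ⟨hA, hp⟩ => h (hσ hA ▸ hp)
      rw [measure_empty] at hempty
      rw [le_antisymm hempty zero_le]
      simp [strings, h]
  | succ n ih =>
    have hchild (b : Bool) : μ[{A | p (pre A (σ.length + (n + 1)))} | cyl (σ ++ [b])] =
        (strings n).countP (fun τ => p (σ ++ b :: τ)) / 2 ^ n := by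
      simpa [add_assoc, add_comm 1] using ih (σ ++ [b])
    have hpow : ((2 : ℝ≥0∞) ^ n)⁻¹ * 2⁻¹ = (2 ^ (n + 1))⁻¹ := by
      rw [ENNReal.inv_pow, ENNReal.inv_pow, pow_succ]
    rw [hμ.cond_cyl_eq_average, hchild, hchild, ← ENNReal.add_div]
    simp only [div_eq_mul_inv, mul_assoc, hpow]
    simp [strings, List.countP_map, Function.comp_def]

lemma iSup_sum_range_eq_tsum {f : ℕ → ℕ → ℝ≥0∞} (hf : ∀ i, Monotone (f i)) :
    ⨆ s, ∑ i ∈ Finset.range s, f i s = ∑' i, ⨆ s, f i s := by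
  refine le_antisymm (iSup_le fun s => ?_) ?_
  · exact (Finset.sum_le_sum fun i _ => le_iSup (f i) s).trans (ENNReal.sum_le_tsum _)
  · simp_rw [ENNReal.tsum_eq_iSup_nat, ENNReal.finsetSum_iSup_of_monotone hf]
    refine iSup₂_le fun n s => le_iSup_of_le (max n s) ?_
    exact (Finset.sum_le_sum fun i _ => hf i (le_max_right n s)).trans
      (Finset.sum_le_sum_of_subset (Finset.range_mono (le_max_left n s)))

/-- The martingale `σ ↦ ∑ i, μ (U i | [σ])` built from a Martin-Löf test `U`. When the sum is
infinite, `testMartingale μ U σ` has the junk value `0`. -/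
noncomputable def testMartingale (μ : Measure Seq) (U : ℕ → Set Seq) (σ : Str) : ℝ≥0 :=
  (∑' i, μ[U i | cyl σ]).toNNReal

section TestMartingale

variable {μ : Measure Seq} {U : ℕ → Set Seq}

lemma tsum_cond_cyl_ne_top (hμ : FairCoin μ) (hU : ∑' i, μ (U i) ≠ ∞) (σ : Str) :
    ∑' i, μ[U i | cyl σ] ≠ ∞ := by
  refine ne_top_of_le_ne_top ?_ (ENNReal.tsum_le_tsum fun i => hμ.cond_cyl_le (U i) σ)
  rw [ENNReal.tsum_mul_left]
  finiteness

lemma coe_testMartingale (hμ : FairCoin μ) (hU : ∑' i, μ (U i) ≠ ∞) (σ : Str) :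
    (testMartingale μ U σ : ℝ≥0∞) = ∑' i, μ[U i | cyl σ] :=
  ENNReal.coe_toNNReal (tsum_cond_cyl_ne_top hμ hU σ)

lemma isMartingale_testMartingale (hμ : FairCoin μ) (hU : ∑' i, μ (U i) ≠ ∞) :
    IsMartingale (testMartingale μ U) := by
  intro σ
  rw [← ENNReal.coe_inj, ENNReal.coe_div two_ne_zero, ENNReal.coe_add, ENNReal.coe_two]
  simp only [coe_testMartingale hμ hU, div_eq_mul_inv]
  rw [← ENNReal.tsum_add, ← ENNReal.tsum_mul_right]
  exact tsum_congr fun i => hμ.cond_cyl_eq_average (U i) σ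

lemma succeeds_testMartingale (hμ : FairCoin μ) (hU : ∑' i, μ (U i) ≠ ∞) {A : Seq}
    (hA : ∀ i, ∃ n, cyl (pre A n) ⊆ U i) : Succeeds (testMartingale μ U) A := by
  refine Tendsto.limsup_eq (ENNReal.tendsto_nhds_top fun M => ?_)
  have hone (i : ℕ) : ∀ᶠ n in atTop, μ[U i | cyl (pre A n)] = 1 := by
    obtain ⟨m, hm⟩ := hA i
    filter_upwards [eventually_ge_atTop m] with n hn
    exact hμ.cond_cyl_eq_one ((cyl_pre_anti A hn).trans hm)
  filter_upwards [(Filter.eventually_all_finset (Finset.range (M + 1))).2 fun i _ => hone i]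
    with n hn
  calc (M : ℝ≥0∞)
    _ < (M + 1 : ℕ) := by exact_mod_cast M.lt_succ_self
    _ = ∑ i ∈ Finset.range (M + 1), μ[U i | cyl (pre A n)] := by
      rw [Finset.sum_congr rfl hn, Finset.sum_const, Finset.card_range, nsmul_one]
    _ ≤ testMartingale μ U (pre A n) := by
      rw [coe_testMartingale hμ hU]
      exact ENNReal.sum_le_tsum _

lemma MLTest.tsum_measure_ne_top (hU : MLTest μ U) : ∑' i, μ (U i) ≠ ∞ := by
  obtain ⟨-, -, -, hle⟩ := hU
  refine ne_top_of_le_ne_top ?_ (ENNReal.tsum_le_tsum hle)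
  rw [ENNReal.tsum_geometric]
  simp

end TestMartingale

/-- The part of the `i`-th class of a test known at stage `s`, where `V x s` says that `x` has
been enumerated by stage `s`. Only strings of length below `s` are used, which makes it a finite
union of cylinders. -/
def stageSet (V : ℕ × Str → ℕ → Bool) (i s : ℕ) : Set Seq :=
  {A | ∃ k < s, V (i, pre A k) s}

/-- The `s`-th approximation `∑ i < s, μ (stageSet V i s | [σ])` to the martingale of the test
enumerated by `V`, computed by counting strings of length `s`. -/
def stageApprox (V : ℕ × Str → ℕ → Bool) (x : Str × ℕ) : ℚ :=
  (∑ i ∈ Finset.range x.2, (strings x.2).countP fun τ =>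
    ∃ k < x.2, V (i, (x.1 ++ τ).take k) x.2 : ℕ) / (2 ^ x.2 : ℕ)

section Stage

variable {μ : Measure Seq} {U : ℕ → Set Seq} {V : ℕ × Str → ℕ → Bool}

lemma monotone_stageSet (hV : ∀ x, Monotone (V x)) (i : ℕ) : Monotone (stageSet V i) :=
  fun _ _ hst _ ⟨k, hk, hA⟩ => ⟨k, hk.trans_le hst, Bool.le_iff_imp.1 (hV _ hst) hA⟩

lemma monotone_cond_stageSet (hV : ∀ x, Monotone (V x)) (i : ℕ) (σ : Str) :
    Monotone fun s => μ[stageSet V i s | cyl σ] :=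
  fun _ _ hst => measure_mono (monotone_stageSet hV i hst)

lemma monotone_sum_cond_stageSet (hV : ∀ x, Monotone (V x)) (σ : Str) :
    Monotone fun s => ∑ i ∈ Finset.range s, μ[stageSet V i s | cyl σ] :=
  fun _ _ hst => (Finset.sum_le_sum fun i _ => monotone_cond_stageSet hV i σ hst).trans
    (Finset.sum_le_sum_of_subset (Finset.range_mono hst))

lemma iUnion_stageSet (hV : ∀ x, Monotone (V x)) (i : ℕ) :
    ⋃ s, stageSet V i s = {A | ∃ n s, V (i, pre A n) s} := by
  ext A
  simp only [Set.mem_iUnion, Set.mem_ofPred_eq]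
  refine ⟨fun ⟨s, k, _, h⟩ => ⟨k, s, h⟩, fun ⟨k, s, h⟩ => ⟨max s (k + 1), k, ?_, ?_⟩⟩
  · exact Nat.lt_of_succ_le (le_max_right _ _)
  · exact Bool.le_iff_imp.1 (hV _ (le_max_left _ _)) h

lemma computable_stageApprox (hV : Primrec₂ V) : Computable (stageApprox V) := by
  have hmem : PrimrecRel fun (k : ℕ) (x : ((Str × ℕ) × ℕ) × Str) =>
      V (x.1.2, (x.1.1.1 ++ x.2).take k) x.1.1.2 = true := by
    have happend : Primrec fun x : ℕ × ((Str × ℕ) × ℕ) × Str => x.2.1.1.1 ++ x.2.2 :=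
      Primrec.list_append.comp
        (Primrec.fst.comp (Primrec.fst.comp (Primrec.fst.comp .snd))) (Primrec.snd.comp .snd)
    exact Primrec.eq.comp (hV.comp
      ((Primrec.snd.comp (Primrec.fst.comp .snd)).pair (Primrec.list_take.comp .fst happend))
      (Primrec.snd.comp (Primrec.fst.comp (Primrec.fst.comp .snd)))) (.const true)
  have hexists : PrimrecRel fun (x : (Str × ℕ) × ℕ) (τ : Str) =>
      ∃ k < x.1.2, V (x.2, (x.1.1 ++ τ).take k) x.1.2 :=
    (hmem.exists_mem_list.comp (Primrec.list_range.comp (Primrec.snd.comp (Primrec.fst.comp .fst)))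
      .id).of_eq fun x => by simp
  have hcount : Primrec₂ fun (x : Str × ℕ) (i : ℕ) => (strings x.2).countP fun τ =>
      ∃ k < x.2, V (i, (x.1 ++ τ).take k) x.2 :=
    primrec_list_countP (primrec_strings.comp (Primrec.snd.comp .fst)) hexists
  exact computable_natCast_div_natCast (primrec_sum_range hcount .snd).to_comp
    (primrec_nat_pow.comp (.const 2) .snd).to_comp fun x => by positivity

lemma stageApprox_eq_sum (hμ : FairCoin μ) (σ : Str) (s : ℕ) :
    (stageApprox V (σ, s) : ℝ) = (∑ i ∈ Finset.range s, μ[stageSet V i s | cyl σ]).toReal := by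
  have hstage (i : ℕ) : stageSet V i s =
      {A | ∃ k < s, V (i, (pre A (σ.length + s)).take k) s} := by
    ext A
    simp only [stageSet, Set.mem_ofPred_eq]
    refine exists_congr fun k => and_congr_right fun hk => ?_
    rw [take_pre A (by omega)]
  have hcond (i : ℕ) := hμ.cond_setOf_pre (fun τ => ∃ k < s, V (i, τ.take k) s) σ s
  simp only [hstage, hcond, stageApprox]
  rw [ENNReal.toReal_sum fun i _ => by finiteness]
  simp [Finset.sum_div]

lemma tendsto_stageApprox (hμ : FairCoin μ) (hV : ∀ x, Monotone (V x))
    (hVU : ∀ i, U i = ⋃ s, stageSet V i s) (hU : ∑' i, μ (U i) ≠ ∞) (σ : Str) :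
    Tendsto (fun s => (stageApprox V (σ, s) : ℝ)) atTop (𝓝 (testMartingale μ U σ)) := by
  have hlim : ⨆ s, ∑ i ∈ Finset.range s, μ[stageSet V i s | cyl σ] = ∑' i, μ[U i | cyl σ] := by
    rw [iSup_sum_range_eq_tsum fun i => monotone_cond_stageSet hV i σ]
    exact tsum_congr fun i => by rw [hVU, (monotone_stageSet hV i).measure_iUnion]
  simp only [stageApprox_eq_sum hμ]
  exact (ENNReal.tendsto_toReal (tsum_cond_cyl_ne_top hμ hU σ)).comp
    (hlim ▸ tendsto_atTop_iSup (monotone_sum_cond_stageSet hV σ))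

lemma monotone_stageApprox (hμ : FairCoin μ) (hV : ∀ x, Monotone (V x)) (σ : Str) :
    Monotone fun s => stageApprox V (σ, s) := by
  intro s t hst
  rw [← Rat.cast_le (K := ℝ), stageApprox_eq_sum hμ, stageApprox_eq_sum hμ]
  exact ENNReal.toReal_mono (ENNReal.sum_ne_top.2 fun i _ => by finiteness)
    (monotone_sum_cond_stageSet hV σ hst)

theorem MLTest.exists_isMartingale (hμ : FairCoin μ) (hU : MLTest μ U) :
    ∃ d, IsMartingale d ∧ CEValues d ∧ ⋂ i, U i ⊆ successSet d := by
  have hfin := hU.tsum_measure_ne_top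
  obtain ⟨W, hW, hUW, -⟩ := hU
  obtain ⟨V, hVprim, hVmono, hVW⟩ := hW.exists_primrec_stages
  have hUpre (i : ℕ) : U i = {A | ∃ n, (i, pre A n) ∈ W} := (hUW i).trans (biUnion_cyl _)
  refine ⟨testMartingale μ U, isMartingale_testMartingale hμ hfin,
    ⟨stageApprox V, computable_stageApprox hVprim, monotone_stageApprox hμ hVmono,
      tendsto_stageApprox hμ hVmono (fun i => ?_) hfin⟩,
    fun A hA => succeeds_testMartingale hμ hfin fun i => ?_⟩
  · rw [iUnion_stageSet hVmono, hUpre]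
    simp only [hVW]
  · obtain ⟨n, hn⟩ : ∃ n, (i, pre A n) ∈ W := by simpa [hUpre] using Set.mem_iInter.1 hA i
    exact ⟨n, hUW i ▸ Set.subset_biUnion_of_mem (u := cyl) hn⟩

end Stage

/-- **Schnorr's martingale characterization of Martin-Löf randomness**: `A` is
Martin-Löf random if and only if no c.e. martingale succeeds on `A`. -/
theorem MLRandom_iff_no_ce_martingale (μ : MeasureTheory.Measure Seq)
    (hμ : FairCoin μ) (A : Seq) :
    MLRandom μ A ↔
      ¬ ∃ d : Str → ℝ≥0, IsMartingale d ∧ CEValues d ∧ Succeeds d A := by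
  constructor
  · rintro hA ⟨d, hd, hce, hsucc⟩
    obtain ⟨U, hU, hdU⟩ := hd.exists_mlTest hμ hce
    exact hA U hU (hdU hsucc)
  · intro hA U hU hAU
    obtain ⟨d, hd, hce, hUd⟩ := hU.exists_isMartingale hμ
    exact hA ⟨d, hd, hce, hUd hAU⟩

end AR
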